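/- Fix d ≥ 3 and consider the uncontrolled randomised switching problem with the symmetric transition matrix P given by P_{i,j} = 1/(d−1) for i ≠ j and P_{i,i} = 0, and a cost vector c̄ ∈ ℝ^d such that the domain D has nonempty interior. Then there exist a function H : ℝ^d → S_d(ℝ) (symmetric d×d matrices) and a constant L ≥ 1 such that: (1) L^{-1}|v|² ≤ vᵀ H(y) v ≤ L|v|² for all y ∈ ℝ^d and v ∈ ℝ^d, and |H(y)| ≤ L; (2) H is of class C¹ with |∂_y H| ≤ L, and y ↦ H(y)^{-1} is of class C² with |H^{-1}| + |∂_y H^{-1}| + |∂²_{yy} H^{-1}| ≤ L; (3) for every y ∈ D and every v in the outward normal cone C(y), the vector H(y)v belongs to the reflection cone C_o(y) := { −∑_{i=1}^d α_i e_i : α_i ≥ 0 and α_i = 0 whenever y_i > ∑_j P_{i,j} y_j − c̄_i }. -/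

import Mathlib

open Matrix

def BD {E : Type*} [NormedAddCommGroup E] [NormedSpace ℝ E] (f : E → ℝ) : Prop :=
  ContDiff ℝ 2 f ∧ ∃ C : ℝ, ∀ k : ℕ, k ≤ 2 → ∀ y, ‖iteratedFDeriv ℝ k f y‖ ≤ C

section BDsec
variable {E : Type*} [NormedAddCommGroup E] [NormedSpace ℝ E]

lemma BD.const (a : ℝ) : BD (fun _ : E => a) := by
  refine ⟨contDiff_const, |a|, fun k hk y => ?_⟩
  rcases Nat.eq_zero_or_pos k with rfl | h
  · simp
  · rw [iteratedFDeriv_const_of_ne (by omega)]; simp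

lemma BD.add {f g : E → ℝ} (hf : BD f) (hg : BD g) : BD (fun y => f y + g y) := by
  obtain ⟨hf, C, hC⟩ := hf
  obtain ⟨hg, K, hK⟩ := hg
  refine ⟨hf.add hg, C + K, fun k hk y => ?_⟩
  have hk' : (k : WithTop ℕ∞) ≤ 2 := by exact_mod_cast hk
  have : iteratedFDeriv ℝ k (fun y => f y + g y) y
      = iteratedFDeriv ℝ k f y + iteratedFDeriv ℝ k g y :=
    iteratedFDeriv_add_apply (hf.of_le hk').contDiffAt (hg.of_le hk').contDiffAt
  rw [this]
  exact (norm_add_le _ _).trans (add_le_add (hC k hk y) (hK k hk y))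

lemma BD.mul {f g : E → ℝ} (hf : BD f) (hg : BD g) : BD (fun y => f y * g y) := by
  obtain ⟨hf, C, hC⟩ := hf
  obtain ⟨hg, K, hK⟩ := hg
  refine ⟨hf.mul hg, 4 * (C * K), fun k hk y => ?_⟩
  have hk' : (k : WithTop ℕ∞) ≤ 2 := by exact_mod_cast hk
  have hC0 : 0 ≤ C := (norm_nonneg _).trans (hC 0 (by norm_num) y)
  have hK0 : 0 ≤ K := (norm_nonneg _).trans (hK 0 (by norm_num) y)
  refine (norm_iteratedFDeriv_mul_le hf hg y hk').trans ?_
  calc _ ≤ ∑ i ∈ Finset.range (k + 1), (k.choose i : ℝ) * (C * K) := by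
        refine Finset.sum_le_sum fun i hi => ?_
        have hi' := Finset.mem_range.1 hi
        rw [mul_assoc]
        gcongr
        · exact hC i (by omega) y
        · exact hK _ (by omega) y
    _ = (2 : ℝ) ^ k * (C * K) := by
        rw [← Finset.sum_mul]
        congr 1
        exact_mod_cast Nat.sum_range_choose k
    _ ≤ 4 * (C * K) := by
        gcongr
        calc (2 : ℝ) ^ k ≤ 2 ^ 2 := pow_le_pow_right₀ (by norm_num) hk
          _ = 4 := by norm_num

lemma BD.sub {f g : E → ℝ} (hf : BD f) (hg : BD g) : BD (fun y => f y - g y) := by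
  have := hf.add ((BD.const (-1)).mul hg)
  convert this using 2
  ring

lemma BD.sum {ι : Type*} (s : Finset ι) {f : ι → E → ℝ} (hf : ∀ i, BD (f i)) :
    BD (fun y => ∑ i ∈ s, f i y) := by
  classical
  induction s using Finset.induction_on with
  | empty => simpa using BD.const (0 : ℝ)
  | insert a s ha ih => simpa [Finset.sum_insert ha] using (hf a).add ih

lemma BD.prod {ι : Type*} (s : Finset ι) {f : ι → E → ℝ} (hf : ∀ i, BD (f i)) :
    BD (fun y => ∏ i ∈ s, f i y) := by
  classical
  induction s using Finset.induction_on with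
  | empty => simpa using BD.const (1 : ℝ)
  | insert a s ha ih => simpa [Finset.prod_insert ha] using (hf a).mul ih

lemma BD.comp_clm {f : ℝ → ℝ} (hf : BD f) (g : E →L[ℝ] ℝ) : BD (fun y => f (g y)) := by
  obtain ⟨hf, C, hC⟩ := hf
  refine ⟨hf.comp g.contDiff, C * (1 + ‖g‖) ^ 2, fun k hk y => ?_⟩
  have hk' : (k : WithTop ℕ∞) ≤ 2 := by exact_mod_cast hk
  have hC0 : 0 ≤ C := (norm_nonneg _).trans (hC 0 (by norm_num) 0)
  have : iteratedFDeriv ℝ k (fun y => f (g y)) y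
      = (iteratedFDeriv ℝ k f (g y)).compContinuousLinearMap fun _ => g :=
    g.iteratedFDeriv_comp_right hf y hk'
  rw [this]
  refine (ContinuousMultilinearMap.norm_compContinuousLinearMap_le _ _).trans ?_
  simp only [Finset.prod_const, Finset.card_univ, Fintype.card_fin]
  have h0 := norm_nonneg g
  refine mul_le_mul (hC k hk _) ?_ (by positivity) hC0
  calc ‖g‖ ^ k ≤ (1 + ‖g‖) ^ k := by gcongr; linarith
    _ ≤ _ := pow_le_pow_right₀ (by linarith) hk

lemma BD.shift {f : ℝ → ℝ} (hf : BD f) (a : ℝ) : BD (fun y => f (y + a)) := by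
  obtain ⟨hf, C, hC⟩ := hf
  refine ⟨hf.comp (contDiff_id.add contDiff_const), C, fun k hk y => ?_⟩
  rw [iteratedFDeriv_comp_add_right]
  exact hC k hk _

lemma BD.smoothTransition : BD Real.smoothTransition := by
  have hs : ContDiff ℝ 2 Real.smoothTransition := Real.smoothTransition.contDiff
  have key : ∀ k : ℕ, k ≤ 2 → ∃ C : ℝ, ∀ y, ‖iteratedFDeriv ℝ k Real.smoothTransition y‖ ≤ C := by
    intro k hk
    have hk' : (k : WithTop ℕ∞) ≤ 2 := by exact_mod_cast hk
    have hc : Continuous (iteratedFDeriv ℝ k Real.smoothTransition) :=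
      hs.continuous_iteratedFDeriv hk'
    obtain ⟨C, hC⟩ := (isCompact_Icc (a := (-1 : ℝ)) (b := 2)).exists_bound_of_continuousOn
      hc.continuousOn
    obtain ⟨_, C0, hC0⟩ := BD.const (E := ℝ) 0
    obtain ⟨_, C1, hC1⟩ := BD.const (E := ℝ) 1
    refine ⟨max C (max C0 C1), fun y => ?_⟩
    by_cases h1 : y < -1
    · have : Real.smoothTransition =ᶠ[nhds y] fun _ => (0 : ℝ) := by
        filter_upwards [Iio_mem_nhds h1] with x hx
        exact Real.smoothTransition.zero_of_nonpos (by have := Set.mem_Iio.1 hx; linarith)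
      rw [(this.iteratedFDeriv ℝ k).eq_of_nhds]
      exact (hC0 k hk y).trans (by simp)
    by_cases h2 : 2 < y
    · have : Real.smoothTransition =ᶠ[nhds y] fun _ => (1 : ℝ) := by
        filter_upwards [Ioi_mem_nhds h2] with x hx
        exact Real.smoothTransition.one_of_one_le (by have := Set.mem_Ioi.1 hx; linarith)
      rw [(this.iteratedFDeriv ℝ k).eq_of_nhds]
      exact (hC1 k hk y).trans (by simp)
    · exact (hC y ⟨not_lt.1 h1, not_lt.1 h2⟩).trans (by simp)
  obtain ⟨A, hA⟩ := key 0 (by norm_num)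
  obtain ⟨B, hB⟩ := key 1 (by norm_num)
  obtain ⟨C, hC⟩ := key 2 (by norm_num)
  refine ⟨hs, max A (max B C), fun k hk y => ?_⟩
  interval_cases k
  · exact (hA y).trans (by simp)
  · exact (hB y).trans (by simp)
  · exact (hC y).trans (by simp)

lemma BD.bounds {f : E → ℝ} (hf : BD f) : ∃ C : ℝ, ∀ y, |f y| ≤ C ∧ ‖fderiv ℝ f y‖ ≤ C ∧
    ‖fderiv ℝ (fderiv ℝ f) y‖ ≤ C := by
  obtain ⟨hf, C, hC⟩ := hf
  refine ⟨C, fun y => ⟨?_, ?_, ?_⟩⟩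
  · have := hC 0 (by norm_num) y
    rwa [norm_iteratedFDeriv_zero, Real.norm_eq_abs] at this
  · have := hC 1 (by norm_num) y
    rwa [norm_iteratedFDeriv_one] at this
  · have := hC 2 (by norm_num) y
    rwa [← norm_iteratedFDeriv_fderiv, norm_iteratedFDeriv_one] at this

lemma BD.bounds_fam {ι : Type*} [Finite ι] {f : ι → ι → E → ℝ} (hf : ∀ i j, BD (f i j)) :
    ∃ C : ℝ, ∀ y i j, |f i j y| ≤ C ∧ ‖fderiv ℝ (f i j) y‖ ≤ C ∧
    ‖fderiv ℝ (fderiv ℝ (f i j)) y‖ ≤ C := by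
  choose C hC using fun i j => (hf i j).bounds
  obtain ⟨M, hM⟩ := Finite.exists_le (fun p : ι × ι => C p.1 p.2)
  exact ⟨M, fun y i j => ⟨(hC i j y).1.trans (hM (i, j)), (hC i j y).2.1.trans (hM (i, j)),
    (hC i j y).2.2.trans (hM (i, j))⟩⟩

end BDsec

/-- the matrix `(I + 1 zᵀ)(I + z 1ᵀ)` -/
def Hm {ι : Type*} [Fintype ι] [DecidableEq ι] (z : ι → ℝ) : Matrix ι ι ℝ :=
  Matrix.of fun i j => (if i = j then (1 : ℝ) else 0) + z i + z j + ∑ k, z k * z k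

def Gm {ι : Type*} [Fintype ι] [DecidableEq ι] (z : ι → ℝ) : Matrix ι ι ℝ :=
  Matrix.of fun i j => (if i = j then (1 : ℝ) else 0) - z i - z j + Fintype.card ι * (z i * z j)

section Hsec
variable {ι : Type*} [Fintype ι] [DecidableEq ι]

lemma Hm_inv (z : ι → ℝ) (hz : ∑ i, z i = 0) : (Hm z)⁻¹ = Gm z := by
  apply Matrix.inv_eq_right_inv
  ext i j
  simp only [Hm, Gm, Matrix.mul_apply, Matrix.of_apply, Matrix.one_apply]
  have h : ∀ k, ((if i = k then (1 : ℝ) else 0) + z i + z k + ∑ l, z l * z l) *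
      ((if k = j then (1 : ℝ) else 0) - z k - z j + Fintype.card ι * (z k * z j)) =
      (if i = k then ((if k = j then (1 : ℝ) else 0) - z k - z j
        + Fintype.card ι * (z k * z j)) else 0)
      + (if k = j then (z i + z k + ∑ l, z l * z l) else 0)
      + (- (z i + ∑ l, z l * z l) + (z i + ∑ l, z l * z l) * (Fintype.card ι * z j) - z j) * z k
      + (-1 + Fintype.card ι * z j) * (z k * z k)
      - (z i + ∑ l, z l * z l) * z j := by
    intro k
    split_ifs <;> ring
  rw [Finset.sum_congr rfl fun k _ => h k]
  simp only [Finset.sum_add_distrib, Finset.sum_sub_distrib, ← Finset.mul_sum, hz,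
    Finset.sum_ite_eq, Finset.sum_ite_eq', Finset.mem_univ, if_true, Finset.sum_const,
    Finset.card_univ, nsmul_eq_mul]
  split_ifs <;> ring

lemma Hm_mulVec (z v : ι → ℝ) (i : ι) :
    (Hm z *ᵥ v) i = v i + z i * (∑ k, v k) + ∑ k, z k * v k + (∑ k, z k * z k) * ∑ k, v k := by
  simp only [Hm, Matrix.mulVec, dotProduct, Matrix.of_apply, add_mul, Finset.sum_add_distrib,
    ite_mul, one_mul, zero_mul, Finset.sum_ite_eq, Finset.mem_univ, if_true, ← Finset.mul_sum]

lemma Hm_quad (z v : ι → ℝ) :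
    v ⬝ᵥ (Hm z *ᵥ v) = ∑ i, (v i + z i * ∑ k, v k) ^ 2 := by
  simp only [dotProduct, Hm_mulVec]
  set S := ∑ k, v k with hS
  have h1 : ∀ i, v i * (v i + z i * S + ∑ k, z k * v k + (∑ k, z k * z k) * S) =
    v i * v i + S * (z i * v i) + (∑ k, z k * v k + (∑ k, z k * z k) * S) * v i := by
    intro i; ring
  have h2 : ∀ i, (v i + z i * S) ^ 2 = v i * v i + (2 * S) * (z i * v i) + S ^ 2 * (z i * z i) := by
    intro i; ring
  simp only [h1, h2, Finset.sum_add_distrib, ← Finset.mul_sum, ← hS]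
  ring

lemma shear_bound (z v : ι → ℝ) (hb : ∀ i, |z i| ≤ 1) (a : ℝ) (ha : a ^ 2 = 1) :
    ∑ i, (v i + a * z i * ∑ k, v k) ^ 2 ≤ (2 + 2 * (Fintype.card ι : ℝ) ^ 2) * ∑ i, v i ^ 2 := by
  set S := ∑ k, v k with hS
  have hcs : S ^ 2 ≤ Fintype.card ι * ∑ i, v i ^ 2 := by
    have := sq_sum_le_card_mul_sum_sq (s := (Finset.univ : Finset ι)) (f := v)
    simpa using this
  have h : ∀ i, (v i + a * z i * S) ^ 2 ≤ 2 * v i ^ 2 + 2 * S ^ 2 := by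
    intro i
    have hz : z i ^ 2 ≤ 1 := by
      rw [sq_le_one_iff_abs_le_one]; exact hb i
    have : (a * z i * S) ^ 2 ≤ S ^ 2 := by
      rw [mul_pow, mul_pow, ha]; nlinarith [sq_nonneg S]
    nlinarith [sq_nonneg (v i - a * z i * S)]
  calc _ ≤ ∑ i, (2 * v i ^ 2 + 2 * S ^ 2) := Finset.sum_le_sum fun i _ => h i
    _ = 2 * ∑ i, v i ^ 2 + Fintype.card ι * (2 * S ^ 2) := by
      rw [Finset.sum_add_distrib, ← Finset.mul_sum]; simp
    _ ≤ 2 * ∑ i, v i ^ 2 + Fintype.card ι * (2 * (Fintype.card ι * ∑ i, v i ^ 2)) := by gcongr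
    _ = _ := by ring

lemma Hm_upper (z v : ι → ℝ) (hb : ∀ i, |z i| ≤ 1) :
    v ⬝ᵥ (Hm z *ᵥ v) ≤ (2 + 2 * (Fintype.card ι : ℝ) ^ 2) * ∑ i, v i ^ 2 := by
  rw [Hm_quad]
  simpa using shear_bound z v hb 1 (by norm_num)

lemma Hm_lower (z v : ι → ℝ) (hz : ∑ i, z i = 0) (hb : ∀ i, |z i| ≤ 1) :
    ∑ i, v i ^ 2 ≤ (2 + 2 * (Fintype.card ι : ℝ) ^ 2) * (v ⬝ᵥ (Hm z *ᵥ v)) := by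
  rw [Hm_quad]
  have := shear_bound z (fun i => v i + z i * ∑ k, v k) hb (-1) (by norm_num)
  refine le_trans (le_of_eq ?_) this
  refine Finset.sum_congr rfl fun i _ => ?_
  rw [Finset.sum_add_distrib, ← Finset.sum_mul, hz]
  ring

end Hsec

/-- The uncontrolled randomised switching problem in dimension
`d = n + 3 ≥ 3` with the symmetric transition matrix `P i j = 1/(d−1)` for `i ≠ j`,
`P i i = 0`, and cost vector `c̄` such that `D` has nonempty interior.  There exist
`H : ℝ^d → S_d(ℝ)` and `L ≥ 1` such that:
(1) `L⁻¹|v|² ≤ vᵀ H(y) v ≤ L|v|²` and `|H(y)| ≤ L` (entrywise);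
(2) `H` is `C¹` with `|∂H| ≤ L`, and `y ↦ H(y)⁻¹` is `C²` with
`|H⁻¹| + |∂H⁻¹| + |∂²H⁻¹| ≤ L` (entrywise, derivative norms bounded by `L`);
(3) for every `y ∈ D` and `v` in the outward normal cone at `y`, `H(y) v` lies in
the reflection cone `C_o(y)`. -/
theorem existence_of_smooth_symmetric_reflection_operator_symmetric_example
    (n : ℕ)
    (P : Matrix (Fin (n + 3)) (Fin (n + 3)) ℝ)
    (hP : P = Matrix.of fun i j => if i = j then (0 : ℝ) else 1 / (n + 2))
    (c : Fin (n + 3) → ℝ)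
    (D : Set (Fin (n + 3) → ℝ))
    (hD : D = {x | ∀ i, (∑ j, P i j * x j) - c i ≤ x i})
    (hint : (interior D).Nonempty) :
    ∃ (H : (Fin (n + 3) → ℝ) → Matrix (Fin (n + 3)) (Fin (n + 3)) ℝ) (L : ℝ),
      1 ≤ L ∧
      (∀ y, (H y).IsSymm) ∧
      (∀ y v : Fin (n + 3) → ℝ,
        L⁻¹ * (∑ i, (v i) ^ 2) ≤ v ⬝ᵥ (H y *ᵥ v) ∧
        v ⬝ᵥ (H y *ᵥ v) ≤ L * (∑ i, (v i) ^ 2)) ∧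
      (∀ y i j, |H y i j| ≤ L) ∧
      (∀ i j : Fin (n + 3), ContDiff ℝ 1 (fun y => H y i j)) ∧
      (∀ (y : Fin (n + 3) → ℝ) (i j : Fin (n + 3)),
        ‖fderiv ℝ (fun y' => H y' i j) y‖ ≤ L) ∧
      (∀ i j : Fin (n + 3), ContDiff ℝ 2 (fun y => (H y)⁻¹ i j)) ∧
      (∀ (y : Fin (n + 3) → ℝ) (i j : Fin (n + 3)),
        |(H y)⁻¹ i j| ≤ L ∧
        ‖fderiv ℝ (fun y' => (H y')⁻¹ i j) y‖ ≤ L ∧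
        ‖fderiv ℝ (fderiv ℝ (fun y' => (H y')⁻¹ i j)) y‖ ≤ L) ∧
      (∀ y ∈ D, ∀ v : Fin (n + 3) → ℝ,
        (∀ z ∈ D, (∑ i, v i * (z i - y i)) ≤ 0) →
        ∃ α : Fin (n + 3) → ℝ, (∀ i, 0 ≤ α i) ∧
          (∀ i, (∑ j, P i j * y j) - c i < y i → α i = 0) ∧
          H y *ᵥ v = -α) := by
  classical
  -- slack
  obtain ⟨s, hs⟩ : ∃ s : Fin (n + 3) → (Fin (n + 3) → ℝ) →L[ℝ] ℝ,
      ∀ i y, s i y = y i - ∑ j, P i j * y j :=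
    ⟨fun i => ContinuousLinearMap.proj i - ∑ j, P i j • ContinuousLinearMap.proj j, fun i y => by
      simp⟩
  have hn : (0 : ℝ) < n + 2 := by positivity
  have hs' : ∀ i y, s i y = y i * ((n + 3) / (n + 2)) - (∑ j, y j) / (n + 2) := by
    intro i y
    have h : ∀ j, P i j * y j = y j / (n + 2) - (if i = j then y j / (n + 2) else 0) := by
      intro j
      rw [hP, Matrix.of_apply]
      split_ifs <;> ring
    rw [hs, Finset.sum_congr rfl fun j _ => h j, Finset.sum_sub_distrib, Finset.sum_ite_eq,
      ← Finset.sum_div]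
    simp only [Finset.mem_univ, if_true]
    field_simp
    ring
  have hsum : ∀ y, ∑ i, (s i y + c i) = ∑ i, c i := by
    intro y
    rw [Finset.sum_add_distrib]
    simp only [hs', Finset.sum_sub_distrib, ← Finset.sum_mul, Finset.sum_const, Finset.card_univ,
      Fintype.card_fin, nsmul_eq_mul]
    push_cast
    field_simp
    ring
  have hmem : ∀ y, y ∈ D ↔ ∀ i, 0 ≤ s i y + c i := by
    intro y
    rw [hD, Set.mem_setOf_eq]
    refine forall_congr' fun i => ?_
    rw [hs]
    constructor <;> intro h <;> linarith
  have hsingle : ∀ i k, s k (Pi.single i 1) = (if k = i then ((n + 3) / (n + 2) : ℝ) else 0)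
      - 1 / (n + 2) := by
    intro i k
    rw [hs']
    simp [Pi.single_apply]
  have hσ : 0 < ∑ i, c i := by
    obtain ⟨x, hx⟩ := hint
    have hxD := interior_subset hx
    have htend : Filter.Tendsto (fun t : ℝ => x + t • (Pi.single 0 1 : Fin (n + 3) → ℝ))
        (nhdsWithin 0 (Set.Ioi 0)) (nhds x) := by
      have hc : Continuous (fun t : ℝ => x + t • (Pi.single 0 1 : Fin (n + 3) → ℝ)) := by fun_prop
      have := hc.tendsto 0
      simp only [zero_smul, add_zero] at this
      exact this.mono_left nhdsWithin_le_nhds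
    obtain ⟨t, ht, ht0⟩ := ((htend.eventually (mem_interior_iff_mem_nhds.1 hx)).and
      self_mem_nhdsWithin).exists
    have ht0 : 0 < t := ht0
    have h1 := (hmem _).1 ht
    rw [← hsum (x + t • (Pi.single 0 1 : Fin (n + 3) → ℝ))]
    refine Finset.sum_pos' (fun i _ => h1 i) ⟨0, Finset.mem_univ _, ?_⟩
    have h2 := (hmem _).1 hxD 0
    rw [map_add, map_smul, hsingle, if_pos rfl, smul_eq_mul]
    have : (0 : ℝ) < (n + 3) / (n + 2) - 1 / (n + 2) := by
      rw [← sub_div]; apply div_pos <;> linarith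
    have := mul_pos ht0 this
    linarith
  obtain ⟨σ, hσe⟩ : ∃ σ, σ = ∑ i, c i := ⟨_, rfl⟩
  rw [← hσe] at hσ
  have hd : (0 : ℝ) < n + 3 := by positivity
  obtain ⟨φ, hφ⟩ : ∃ φ : Fin (n + 3) → (Fin (n + 3) → ℝ) → ℝ,
      ∀ i y, φ i y = Real.smoothTransition ((s i y + c i) * ((n + 3) / σ)) :=
    ⟨_, fun _ _ => rfl⟩
  have hφB : ∀ i, BD (φ i) := by
    intro i
    have := (BD.smoothTransition.shift (c i * ((n + 3) / σ))).comp_clm (((n + 3) / σ) • s i)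
    convert this using 2 with y
    rw [hφ]
    congr 1
    simp only [ContinuousLinearMap.smul_apply, smul_eq_mul]
    ring
  have hφ0 : ∀ i y, 0 ≤ φ i y := fun i y => by rw [hφ]; exact Real.smoothTransition.nonneg _
  have hφ1 : ∀ i y, φ i y ≤ 1 := fun i y => by rw [hφ]; exact Real.smoothTransition.le_one _
  have hbig : ∀ y, ∃ j, σ / (n + 3) ≤ s j y + c j := by
    intro y
    by_contra! hcon
    have := Finset.sum_lt_sum_of_nonempty (s := (Finset.univ : Finset (Fin (n + 3))))
      Finset.univ_nonempty (fun j _ => hcon j)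
    rw [hsum, ← hσe] at this
    simp only [Finset.sum_const, Finset.card_univ, Fintype.card_fin, nsmul_eq_mul] at this
    push_cast at this
    rw [mul_div_cancel₀ _ hd.ne'] at this
    exact lt_irrefl _ this
  obtain ⟨p, hp⟩ : ∃ p : Fin (n + 3) → (Fin (n + 3) → ℝ) → ℝ,
      ∀ i y, p i y = φ i y * ∏ j ∈ Finset.univ.filter (· < i), (1 - φ j y) :=
    ⟨_, fun _ _ => rfl⟩
  have hpB : ∀ i, BD (p i) := by
    intro i
    have := (hφB i).mul (BD.prod (Finset.univ.filter (· < i))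
      (fun j => (BD.const (1 : ℝ)).sub (hφB j)))
    convert this using 2 with y
    exact hp i y
  have hp1 : ∀ y, ∑ i, p i y = 1 := by
    intro y
    have h := Finset.prod_one_sub_ordered (Finset.univ : Finset (Fin (n + 3))) (fun i => φ i y)
    obtain ⟨j, hj⟩ := hbig y
    have h0 : ∏ i, (1 - φ i y) = 0 := by
      refine Finset.prod_eq_zero (Finset.mem_univ j) ?_
      rw [hφ, Real.smoothTransition.one_of_one_le, sub_self]
      rw [mul_div_assoc', le_div_iff₀ hσ, one_mul]
      rwa [div_le_iff₀ hd] at hj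
    rw [h0] at h
    simp only [hp]
    linarith
  have hp0 : ∀ i y, 0 ≤ p i y := by
    intro i y
    rw [hp]
    exact mul_nonneg (hφ0 i y) (Finset.prod_nonneg fun j _ => by linarith [hφ1 j y])
  have hple : ∀ i y, p i y ≤ 1 := by
    intro i y
    rw [← hp1 y]
    exact Finset.single_le_sum (f := fun i => p i y) (fun j _ => hp0 j y) (Finset.mem_univ i)
  have hpz : ∀ i y, s i y + c i ≤ 0 → p i y = 0 := by
    intro i y h
    rw [hp, hφ, Real.smoothTransition.zero_of_nonpos, zero_mul]
    exact mul_nonpos_of_nonpos_of_nonneg h (by positivity)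
  obtain ⟨z, hz⟩ : ∃ z : (Fin (n + 3) → ℝ) → Fin (n + 3) → ℝ,
      ∀ y i, z y i = 1 / (n + 3) - p i y := ⟨_, fun _ _ => rfl⟩
  have hzB : ∀ i, BD (fun y => z y i) := by
    intro i
    simp only [hz]
    exact (BD.const _).sub (hpB i)
  have hz0 : ∀ y, ∑ i, z y i = 0 := by
    intro y
    simp only [hz, Finset.sum_sub_distrib, hp1]
    simp
    field_simp
    ring
  have hzb : ∀ y i, |z y i| ≤ 1 := by
    intro y i
    have h1 : (0 : ℝ) < 1 / (n + 3) := by positivity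
    have h2 : (1 : ℝ) / (n + 3) ≤ 1 := by
      rw [div_le_one hd]; have : (0 : ℝ) ≤ n := by positivity
      linarith
    rw [hz, abs_le]
    constructor <;> linarith [hp0 i y, hple i y]
  have hHB : ∀ i j, BD (fun y => Hm (z y) i j) := by
    intro i j
    simp only [Hm, Matrix.of_apply]
    exact (((BD.const _).add (hzB i)).add (hzB j)).add
      (BD.sum _ fun k => (hzB k).mul (hzB k))
  have hGB : ∀ i j, BD (fun y => (Hm (z y))⁻¹ i j) := by
    intro i j
    simp only [Hm_inv _ (hz0 _), Gm, Matrix.of_apply]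
    exact (((BD.const _).sub (hzB i)).sub (hzB j)).add
      ((BD.const _).mul ((hzB i).mul (hzB j)))
  obtain ⟨C1, hC1⟩ := BD.bounds_fam hHB
  obtain ⟨C2, hC2⟩ := BD.bounds_fam hGB
  obtain ⟨K, hK⟩ : ∃ K, K = (2 + 2 * (Fintype.card (Fin (n + 3)) : ℝ) ^ 2) := ⟨_, rfl⟩
  have hK2 : 2 ≤ K := by rw [hK]; have := sq_nonneg (Fintype.card (Fin (n + 3)) : ℝ); linarith
  obtain ⟨L, hL⟩ : ∃ L, L = max K (max C1 C2) := ⟨_, rfl⟩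
  have hKL : K ≤ L := by simp [hL]
  have hC1L : C1 ≤ L := by simp [hL]
  have hC2L : C2 ≤ L := by simp [hL]
  refine ⟨fun y => Hm (z y), L, by linarith, ?_, ?_, fun y i j => (hC1 y i j).1.trans hC1L,
    fun i j => (hHB i j).1.of_le (by norm_num), fun y i j => (hC1 y i j).2.1.trans hC1L,
    fun i j => (hGB i j).1, fun y i j => ⟨(hC2 y i j).1.trans hC2L,
      (hC2 y i j).2.1.trans hC2L, (hC2 y i j).2.2.trans hC2L⟩, ?_⟩
  · intro y
    ext i j
    simp only [Matrix.transpose_apply, Hm, Matrix.of_apply, eq_comm (a := j) (b := i)]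
    ring
  · intro y v
    have hv : 0 ≤ ∑ i, v i ^ 2 := Finset.sum_nonneg fun i _ => sq_nonneg _
    have hq : 0 ≤ v ⬝ᵥ (Hm (z y) *ᵥ v) := by
      rw [Hm_quad]; exact Finset.sum_nonneg fun i _ => sq_nonneg _
    have h1 := Hm_upper (z y) v (hzb y)
    have h2 := Hm_lower (z y) v (hz0 y) (hzb y)
    rw [← hK] at h1 h2
    constructor
    · rw [inv_mul_le_iff₀ (by linarith)]
      exact h2.trans (mul_le_mul_of_nonneg_right hKL hq)
    · exact h1.trans (mul_le_mul_of_nonneg_right hKL hv)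
  · intro y hy v hv
    have hyi := (hmem y).1 hy
    have hone : ∀ a : ℝ, ∑ i, v i * a ≤ 0 := by
      intro a
      have := hv (fun i => y i + a) ((hmem _).2 fun i => by
        refine (hyi i).trans (le_of_eq ?_)
        rw [hs', hs', Finset.sum_add_distrib]
        simp
        field_simp
        ring)
      simpa using this
    have hS : ∑ i, v i = 0 := by
      have h1 := hone 1
      have h2 := hone (-1)
      rw [← Finset.sum_mul] at h1 h2
      linarith
    have hmax : ∀ i j, 0 < s j y + c j → v i ≤ v j := by
      intro i j hj
      by_cases hij : i = j
      · rw [hij]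
      obtain ⟨ε, hε⟩ : ∃ ε, ε = (s j y + c j) * ((n + 2) / (n + 3)) := ⟨_, rfl⟩
      have hε0 : 0 < ε := by rw [hε]; positivity
      have hεe : ε * ((n + 3) / (n + 2)) = s j y + c j := by rw [hε]; field_simp
      have := hv (y + ε • (Pi.single i 1 - Pi.single j 1)) ((hmem _).2 fun k => by
        rw [map_add, map_smul, map_sub, hsingle, hsingle, smul_eq_mul]
        have hk := hyi k
        have h3 : (0 : ℝ) < (n + 3) / (n + 2) := by positivity
        have h4 := mul_pos hε0 h3
        by_cases hkj : k = j
        · subst hkj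
          rw [if_neg (Ne.symm hij), if_pos rfl]
          nlinarith
        · rw [if_neg hkj]
          split_ifs <;> nlinarith)
      have h5 : ∑ k, v k * ((y + ε • (Pi.single i 1 - Pi.single j 1) : Fin (n + 3) → ℝ) k - y k)
          = ε * (v i - v j) := by
        have : ∀ k, v k * ((y + ε • (Pi.single i 1 - Pi.single j 1) : Fin (n + 3) → ℝ) k - y k)
          = (if k = i then ε * v k else 0) - (if k = j then ε * v k else 0) := by
          intro k
          simp only [Pi.add_apply, Pi.smul_apply, Pi.sub_apply, Pi.single_apply, smul_eq_mul]
          split_ifs <;> ring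
        rw [Finset.sum_congr rfl fun k _ => this k, Finset.sum_sub_distrib]
        simp
        ring
      rw [h5] at this
      by_contra! hlt
      have := mul_pos hε0 (sub_pos.2 hlt)
      linarith
    have hpv : ∀ j, 0 < s j y + c j → ∑ k, p k y * v k = v j := by
      intro j hj
      have : ∀ k, p k y * v k = p k y * v j := by
        intro k
        by_cases hk : 0 < s k y + c k
        · rw [le_antisymm (hmax k j hj) (hmax j k hk)]
        · rw [hpz k y (not_lt.1 hk)]; simp
      rw [Finset.sum_congr rfl fun k _ => this k, ← Finset.sum_mul, hp1, one_mul]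
    obtain ⟨j, hj⟩ := hbig y
    have hj : 0 < s j y + c j := lt_of_lt_of_le (by positivity) hj
    refine ⟨fun i => ∑ k, p k y * v k - v i, fun i => ?_, fun i hi => ?_, ?_⟩
    · rw [hpv j hj]; linarith [hmax i j hj]
    · simp only []
      rw [hpv i (by rw [hs]; linarith), sub_self]
    · ext i
      rw [Hm_mulVec, hS]
      simp only [hz, sub_mul, Finset.sum_sub_distrib, ← Finset.mul_sum, hS, Pi.neg_apply]
      ring
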